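/- arXiv:1903.06826 — 2 statements merged into one kernel-verified Lean document; each statement's English description precedes it below -/
import Mathlib

section
/- Let D ⊆ ℝ, let w_n : D → ℝ (n ∈ ℕ), φ : D × ℕ → ℝ, ϕ : D → ℝ, θ ∈ ℝ, and (μ_n) a sequence of reals. Suppose x, y ∈ D are such that there exist sequences ε_n(x) → 0 and ε_n(y) → 0 with w_n(x) = (1 + ε_n(x)) · φ(x,n) · cos(2π(μ_n ϕ(x) − θ)) and w_n(y) = (1 + ε_n(y)) · φ(y,n) · cos(2π(μ_n ϕ(y) − θ)) for all n, and that φ(x,n) · φ(y,n) > 0 for all n. Let p, q be nonzero coprime integers with q · ϕ(x) = p · ϕ(y) and p/ϕ(x) > 0, and assume the sequence (μ_n ϕ(x)/p) is equidistributed modulo 1. Then (1/N) · #{0 ≤ n < N : sgn(w_n(x)) = sgn(w_n(y))} → 1/2 + (1/2) ∫₀¹ Φ(pt − θ, qt − θ) dt as N → ∞, where Φ(u,v) = sgn(cos(2πu)·cos(2πv)). -/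
open Filter Real MeasureTheory
open scoped Classical

noncomputable def sgn (t : ℝ) : ℝ := if 0 < t then 1 else if t < 0 then -1 else 0

noncomputable def Φ (u v : ℝ) : ℝ := sgn (Real.cos (2 * π * u) * Real.cos (2 * π * v))

def EquidistributedMod1 (a : ℕ → ℝ) : Prop :=
  ∀ c d : ℝ, 0 ≤ c → c ≤ d → d ≤ 1 →
    Tendsto (fun N : ℕ =>
      (((Finset.range N).filter (fun n => Int.fract (a n) ∈ Set.Icc c d)).card : ℝ) / N)
      atTop (nhds (d - c))

/-- The empirical distribution of the fractional parts of the first `N + 1` terms of `a`. -/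
noncomputable def fractEmpirical (a : ℕ → ℝ) (N : ℕ) : ProbabilityMeasure ℝ :=
  ⟨(ProbabilityTheory.uniformOn (Finset.range (N + 1) : Set ℕ)).map (fun n => Int.fract (a n)), by
    have := ProbabilityTheory.isProbabilityMeasure_uniformOn
      (Finset.finite_toSet (Finset.range (N + 1))) ⟨0, by simp⟩
    exact Measure.isProbabilityMeasure_map (measurable_from_top).aemeasurable⟩

lemma fractEmpirical_real (a : ℕ → ℝ) (N : ℕ) {E : Set ℝ} (hE : MeasurableSet E) :
    (fractEmpirical a N : Measure ℝ).real E =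
      (((Finset.range (N + 1)).filter (fun n => Int.fract (a n) ∈ E)).card : ℝ) /
        ((N + 1 : ℕ) : ℝ) := by
  have hset : (Finset.range (N + 1) : Set ℕ) ∩ (fun n => Int.fract (a n)) ⁻¹' E =
      ((Finset.range (N + 1)).filter (fun n => Int.fract (a n) ∈ E) : Finset ℕ) := by
    ext n
    simp
  rw [measureReal_def, fractEmpirical, ProbabilityMeasure.coe_mk,
    Measure.map_apply measurable_from_top hE, ProbabilityTheory.uniformOn,
    ProbabilityTheory.cond_apply (Finset.measurableSet _), hset, Measure.count_apply_finset,
    Measure.count_apply_finset, ENNReal.toReal_mul, ENNReal.toReal_inv, ENNReal.toReal_natCast,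
    ENNReal.toReal_natCast, Finset.card_range, div_eq_inv_mul]

/-- Lebesgue measure on the unit interval, as a probability measure on `ℝ`. -/
noncomputable def unitIntervalLebesgue : ProbabilityMeasure ℝ :=
  ⟨volume.restrict (Set.Icc 0 1), ⟨by simp⟩⟩

lemma unitIntervalLebesgue_real_Icc (c d : ℝ) :
    (unitIntervalLebesgue : Measure ℝ).real (Set.Icc c d) = max (min d 1 - max c 0) 0 := by
  rw [measureReal_def, unitIntervalLebesgue, ProbabilityMeasure.coe_mk,
    Measure.restrict_apply measurableSet_Icc, Set.Icc_inter_Icc, Real.volume_Icc,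
    ENNReal.toReal_ofReal']

lemma EquidistributedMod1.tendsto_fractEmpirical {a : ℕ → ℝ} (ha : EquidistributedMod1 a) :
    Tendsto (fractEmpirical a) atTop (nhds unitIntervalLebesgue) := by
  have hpi : IsPiSystem {s : Set ℝ | ∃ c d, s = Set.Icc c d} := by
    rintro _ ⟨c, d, rfl⟩ _ ⟨c', d', rfl⟩ -
    exact ⟨_, _, Set.Icc_inter_Icc⟩
  refine hpi.tendsto_probabilityMeasure_of_tendsto_of_mem ?_ ?_ ?_
  · rintro _ ⟨c, d, rfl⟩
    exact measurableSet_Icc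
  · intro u hu x hx
    obtain ⟨r, hr, hru⟩ := Metric.nhds_basis_closedBall.mem_iff.1 (hu.mem_nhds hx)
    exact ⟨_, ⟨x - r, x + r, Real.closedBall_eq_Icc⟩, Metric.closedBall_mem_nhds x hr, hru⟩
  · rintro _ ⟨c, d, rfl⟩
    rw [← NNReal.tendsto_coe]
    change Tendsto (fun N => (fractEmpirical a N : Measure ℝ).real (Set.Icc c d)) atTop
      (nhds ((unitIntervalLebesgue : Measure ℝ).real (Set.Icc c d)))
    simp only [fractEmpirical_real a _ measurableSet_Icc, unitIntervalLebesgue_real_Icc]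
    have hclip (n : ℕ) : Int.fract (a n) ∈ Set.Icc c d ↔
        Int.fract (a n) ∈ Set.Icc (max c 0) (min d 1) := by
      simp [Int.fract_nonneg, (Int.fract_lt_one (a n)).le]
    simp only [hclip]
    rcases le_or_gt (max c 0) (min d 1) with h | h
    · rw [max_eq_left (sub_nonneg.2 h)]
      exact (tendsto_add_atTop_iff_nat 1).2 (ha _ _ (le_max_right _ _) h (min_le_right _ _))
    · simp [Set.Icc_eq_empty (not_le.2 h), max_eq_right (sub_nonpos.2 h.le)]

/-- For an equidistributed sequence, the frequency of visits to a Jordan measurable set is its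
measure. -/
lemma EquidistributedMod1.tendsto_card_of_null_frontier {a : ℕ → ℝ} (ha : EquidistributedMod1 a)
    {E : Set ℝ} (hE : MeasurableSet E) (hfr : volume (frontier E) = 0) :
    Tendsto (fun N : ℕ =>
      (((Finset.range N).filter (fun n => Int.fract (a n) ∈ E)).card : ℝ) / N)
      atTop (nhds (volume.real (E ∩ Set.Icc 0 1))) := by
  have h := ProbabilityMeasure.tendsto_measure_of_null_frontier_of_tendsto
    ha.tendsto_fractEmpirical (E := E) (by
      rw [ProbabilityMeasure.null_iff_toMeasure_null]
      exact Measure.restrict_le_self.absolutelyContinuous hfr)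
  rw [← NNReal.tendsto_coe] at h
  change Tendsto (fun N => (fractEmpirical a N : Measure ℝ).real E) atTop
    (nhds ((volume.restrict (Set.Icc (0 : ℝ) 1)).real E)) at h
  simp only [fractEmpirical_real a _ hE, measureReal_restrict_apply hE] at h
  exact (tendsto_add_atTop_iff_nat 1).1 h

/-- The frequency of a property squeezed between two properties of the same frequency. -/
lemma tendsto_card_filter_div_of_eventually_imp {P Q R : ℕ → Prop} {l : ℝ}
    (hP : Tendsto (fun N : ℕ => (((Finset.range N).filter P).card : ℝ) / N) atTop (nhds l))
    (hR : Tendsto (fun N : ℕ => (((Finset.range N).filter R).card : ℝ) / N) atTop (nhds l))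
    (hPQ : ∀ᶠ n in atTop, P n → Q n) (hQR : ∀ᶠ n in atTop, Q n → R n) :
    Tendsto (fun N : ℕ => (((Finset.range N).filter Q).card : ℝ) / N) atTop (nhds l) := by
  obtain ⟨m, hm⟩ := eventually_atTop.1 (hPQ.and hQR)
  have hle {S T : ℕ → Prop} (h : ∀ n ≥ m, S n → T n) (N : ℕ) :
      (((Finset.range N).filter S).card : ℝ) / N ≤
        (((Finset.range N).filter T).card : ℝ) / N + (m : ℝ) / N := by
    rw [← add_div]
    gcongr
    have hsub : (Finset.range N).filter S ⊆ (Finset.range N).filter T ∪ Finset.range m := by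
      intro n hn
      simp only [Finset.mem_union, Finset.mem_filter, Finset.mem_range] at hn ⊢
      rcases lt_or_ge n m with h' | h'
      · exact Or.inr h'
      · exact Or.inl ⟨hn.1, h n h' hn.2⟩
    have hcard := (Finset.card_le_card hsub).trans (Finset.card_union_le _ _)
    rw [Finset.card_range] at hcard
    exact_mod_cast hcard
  have hm0 := tendsto_const_div_atTop_nhds_zero_nat (m : ℝ)
  refine tendsto_of_tendsto_of_tendsto_of_le_of_le (by simpa using hP.sub hm0)
    (by simpa using hR.add hm0) (fun N => ?_) (fun N => hle (fun n hn => (hm n hn).2) N)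
  exact sub_le_iff_le_add.2 (hle (fun n hn => (hm n hn).1) N)

lemma sgn_of_pos {t : ℝ} (ht : 0 < t) : sgn t = 1 := if_pos ht

lemma sgn_of_neg {t : ℝ} (ht : t < 0) : sgn t = -1 := by
  rw [sgn, if_neg ht.le.not_gt, if_pos ht]

lemma sgn_eq_of_mul_pos {s t : ℝ} (h : 0 < s * t) : sgn s = sgn t := by
  rcases pos_and_pos_or_neg_and_neg_of_mul_pos h with ⟨hs, ht⟩ | ⟨hs, ht⟩
  · rw [sgn_of_pos hs, sgn_of_pos ht]
  · rw [sgn_of_neg hs, sgn_of_neg ht]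

lemma mul_nonneg_of_sgn_eq {s t : ℝ} (h : sgn s = sgn t) : 0 ≤ s * t := by
  by_contra! hst
  rcases mul_neg_iff.1 hst with ⟨hs, ht⟩ | ⟨hs, ht⟩ <;>
  · simp only [sgn_of_pos, sgn_of_neg, hs, ht] at h
    norm_num at h

lemma countable_setOf_cos_eq_zero {k : ℤ} (hk : k ≠ 0) (θ : ℝ) :
    {t : ℝ | Real.cos (2 * π * (k * t - θ)) = 0}.Countable := by
  refine (Set.countable_range (fun m : ℤ => (((2 * m + 1) / 4 + θ) / k : ℝ))).mono ?_
  intro t ht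
  obtain ⟨m, hm⟩ := Real.cos_eq_zero_iff.1 ht
  have hk' : (k : ℝ) ≠ 0 := by exact_mod_cast hk
  refine ⟨m, ?_⟩
  have : (k : ℝ) * t - θ = (2 * m + 1) / 4 := by
    apply mul_left_cancel₀ Real.two_pi_pos.ne'
    linarith
  simp only [← this]
  field_simp
  ring

lemma cos_int_mul_fract (k : ℤ) (t θ : ℝ) :
    Real.cos (2 * π * (k * Int.fract t - θ)) = Real.cos (2 * π * (k * t - θ)) := by
  rw [← Real.cos_sub_int_mul_two_pi (2 * π * (k * t - θ)) (k * ⌊t⌋), Int.fract]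
  push_cast
  ring_nf

/-- A sign function is integrated by measuring where its argument is positive. -/
lemma integral_sgn_eq {g : ℝ → ℝ} (hg : Measurable g) (hZ : volume {t | g t = 0} = 0) :
    ∫ t in (0 : ℝ)..1, sgn (g t) = 2 * volume.real ({t | 0 < g t} ∩ Set.Icc 0 1) - 1 := by
  have hP : MeasurableSet {t | 0 < g t} := measurableSet_lt measurable_const hg
  have hae : ∀ᵐ t ∂volume.restrict (Set.Icc (0 : ℝ) 1),
      sgn (g t) = 2 * {t | 0 < g t}.indicator 1 t - 1 := by
    refine ae_restrict_of_ae ?_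
    filter_upwards [measure_eq_zero_iff_ae_notMem.1 hZ] with t ht
    rcases lt_or_gt_of_ne ht with h | h
    · rw [sgn_of_neg h, Set.indicator_of_notMem (by simpa using h.le)]
      norm_num
    · rw [sgn_of_pos h, Set.indicator_of_mem (by simpa using h)]
      norm_num
  rw [intervalIntegral.integral_of_le zero_le_one, ← integral_Icc_eq_integral_Ioc,
    integral_congr_ae hae, integral_sub (((integrable_const 1).indicator hP).const_mul 2)
      (integrable_const 1), integral_const_mul, integral_indicator_one hP,
    measureReal_restrict_apply hP]
  simp

theorem sign_correlation_limit_formula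
    (D : Set ℝ) (w : ℕ → ℝ → ℝ) (φ : ℝ → ℕ → ℝ) (ϕ : ℝ → ℝ) (θ : ℝ) (μ : ℕ → ℝ)
    (x y : ℝ) (hx : x ∈ D) (hy : y ∈ D)
    (hax : ∃ ε : ℕ → ℝ, Tendsto ε atTop (nhds 0) ∧
      ∀ n, w n x = (1 + ε n) * φ x n * Real.cos (2 * π * (μ n * ϕ x - θ)))
    (hay : ∃ ε : ℕ → ℝ, Tendsto ε atTop (nhds 0) ∧
      ∀ n, w n y = (1 + ε n) * φ y n * Real.cos (2 * π * (μ n * ϕ y - θ)))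
    (hφ : ∀ n, φ x n * φ y n > 0)
    (p q : ℤ) (hp : p ≠ 0) (hq : q ≠ 0) (hcop : IsCoprime p q)
    (hpq : (q : ℝ) * ϕ x = (p : ℝ) * ϕ y)
    (hpos : (p : ℝ) / ϕ x > 0)
    (hequi : EquidistributedMod1 (fun n => μ n * ϕ x / (p : ℝ))) :
    Tendsto (fun N : ℕ =>
      (((Finset.range N).filter (fun n => sgn (w n x) = sgn (w n y))).card : ℝ) / N)
      atTop (nhds (1/2 + (1/2) * ∫ t in (0:ℝ)..1, Φ ((p : ℝ) * t - θ) ((q : ℝ) * t - θ))) := by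
  obtain ⟨εx, hεx, hwx⟩ := hax
  obtain ⟨εy, hεy, hwy⟩ := hay
  have hp' : (p : ℝ) ≠ 0 := by exact_mod_cast hp
  set g : ℝ → ℝ := fun t =>
    Real.cos (2 * π * (p * t - θ)) * Real.cos (2 * π * (q * t - θ)) with hgdef
  have hg : Continuous g := by fun_prop
  have hZ : volume {t | g t = 0} = 0 := by
    refine (((countable_setOf_cos_eq_zero hp θ).union
      (countable_setOf_cos_eq_zero hq θ)).mono fun t ht => ?_).measure_zero _
    exact mul_eq_zero.1 ht
  have hint : ∫ t in (0 : ℝ)..1, Φ ((p : ℝ) * t - θ) ((q : ℝ) * t - θ) =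
      2 * volume.real ({t | 0 < g t} ∩ Set.Icc 0 1) - 1 := integral_sgn_eq hg.measurable hZ
  have hlim : 1 / 2 + 1 / 2 * ∫ t in (0 : ℝ)..1, Φ ((p : ℝ) * t - θ) ((q : ℝ) * t - θ) =
      volume.real ({t | 0 < g t} ∩ Set.Icc 0 1) := by
    rw [hint]
    ring
  have hpos_nonneg : volume.real ({t | 0 ≤ g t} ∩ Set.Icc 0 1) =
      volume.real ({t | 0 < g t} ∩ Set.Icc 0 1) := by
    refine measureReal_congr ?_
    filter_upwards [measure_eq_zero_iff_ae_notMem.1 hZ] with t ht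
    have ht' : 0 ≠ g t := fun h => ht h.symm
    exact propext (and_congr_left' ⟨fun h => lt_of_le_of_ne h ht',
      fun h => (show 0 < g t from h).le⟩)
  have hfreq_pos := hequi.tendsto_card_of_null_frontier
    (measurableSet_lt measurable_const hg.measurable)
    (measure_mono_null ((frontier_lt_subset_eq continuous_const hg).trans
      fun t ht => Eq.symm ht) hZ)
  have hfreq_nonneg := hequi.tendsto_card_of_null_frontier
    (measurableSet_le measurable_const hg.measurable)
    (measure_mono_null ((frontier_le_subset_eq continuous_const hg).trans
      fun t ht => Eq.symm ht) hZ)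
  rw [hpos_nonneg] at hfreq_nonneg
  rw [hlim]
  have hprod : ∀ᶠ n in atTop, ∃ c > 0,
      w n x * w n y = c * g (Int.fract (μ n * ϕ x / (p : ℝ))) := by
    filter_upwards [hεx.eventually (lt_mem_nhds (show (-1 : ℝ) < 0 by norm_num)),
      hεy.eventually (lt_mem_nhds (show (-1 : ℝ) < 0 by norm_num))] with n hnx hny
    refine ⟨(1 + εx n) * (1 + εy n) * (φ x n * φ y n),
      mul_pos (mul_pos (by linarith) (by linarith)) (hφ n), ?_⟩
    have hpt : (p : ℝ) * (μ n * ϕ x / p) = μ n * ϕ x := by field_simp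
    have hqt : (q : ℝ) * (μ n * ϕ x / p) = μ n * ϕ y := by
      field_simp
      linear_combination μ n * hpq
    simp only [hgdef, cos_int_mul_fract, hpt, hqt, hwx, hwy]
    ring
  refine tendsto_card_filter_div_of_eventually_imp hfreq_pos hfreq_nonneg ?_ ?_
  · filter_upwards [hprod] with n ⟨c, hc, hn⟩ h
    exact sgn_eq_of_mul_pos (hn ▸ mul_pos hc h)
  · filter_upwards [hprod] with n ⟨c, hc, hn⟩ h
    exact nonneg_of_mul_nonneg_right (hn ▸ mul_nonneg_of_sgn_eq h) hc
end

section
/- Let V : ℝ → ℝ be an even, locally Lebesgue-integrable function with ess inf V > −∞ and V(x) → ∞ as |x| → ∞. Let (λ_n) be a sequence of positive reals with λ_n → ∞, and let w_n : ℝ → ℝ be twice differentiable functions satisfying w_n''(x) = 4π²(V(x) − λ_n)·w_n(x) for all x ∈ ℝ. Assume: (H1) w_n is even when n is even and odd when n is odd; (H3) sgn(w_{2n}(0)) = (−1)^n and sgn(w'_{2n+1}(0)) = (−1)^n for all n. Let x, y be real numbers such that x/y is irrational, and assume that both sequences of pairs (√λ_{2n}·x, √λ_{2n}·y)_n and (√λ_{2n+1}·x,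 √λ_{2n+1}·y)_n are equidistributed modulo 1 in ℝ². Then (1/N) · #{0 ≤ n < N : sgn(w_n(x)) = sgn(w_n(y))} → 1/2 as N → ∞. -/
open Filter Real MeasureTheory
open scoped Classical

def EquidistributedMod1Pair (a b : ℕ → ℝ) : Prop :=
  ∀ c₁ d₁ c₂ d₂ : ℝ, 0 ≤ c₁ → c₁ ≤ d₁ → d₁ ≤ 1 → 0 ≤ c₂ → c₂ ≤ d₂ → d₂ ≤ 1 →
    Tendsto (fun N : ℕ =>
      (((Finset.range N).filter (fun n =>
        Int.fract (a n) ∈ Set.Icc c₁ d₁ ∧ Int.fract (b n) ∈ Set.Icc c₂ d₂)).card : ℝ) / N)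
      atTop (nhds ((d₁ - c₁) * (d₂ - c₂)))


/-- Duhamel's formula for `f'' = -ω² f + q f`, compared with the free solution. -/
theorem sub_free_solution_eq_integral {f f' q : ℝ → ℝ} {ω : ℝ} (hω : 0 < ω)
    (hf : ∀ t, HasDerivAt f (f' t) t)
    (hf' : ∀ t, HasDerivAt f' ((q t - ω ^ 2) * f t) t) (hq : LocallyIntegrable q volume) (x : ℝ) :
    f x - (f 0 * cos (ω * x) + f' 0 / ω * sin (ω * x)) =
      ∫ t in (0 : ℝ)..x, q t * (f t * (sin (ω * (x - t)) / ω)) := by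
  have hcont : Continuous f := continuous_iff_continuousAt.2 fun t => (hf t).continuousAt
  have key : ∀ t, HasDerivAt
      (fun t => f t * cos (ω * (x - t)) + f' t * (sin (ω * (x - t)) / ω))
      (q t * (f t * (sin (ω * (x - t)) / ω))) t := by
    intro t
    have hl : HasDerivAt (fun t : ℝ => ω * (x - t)) (ω * (-1)) t :=
      ((hasDerivAt_id t).const_sub x).const_mul ω
    have h := ((hf t).mul hl.cos).add ((hf' t).mul (hl.sin.div_const ω))
    refine h.congr_deriv ?_
    field_simp
    ring
  have hint : IntervalIntegrable (fun t => q t * (f t * (sin (ω * (x - t)) / ω))) volume 0 x :=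
    (hq.integrableOn_isCompact isCompact_uIcc).intervalIntegrable.mul_continuousOn (by fun_prop)
  rw [intervalIntegral.integral_eq_sub_of_hasDerivAt (fun t _ => key t) hint]
  simp
  ring

/-- Uniform comparison of `f'' = -ω² f + q f` with the free solution when `∫ |q|` is small
relative to `ω`. -/
theorem abs_sub_free_solution_le {f f' q : ℝ → ℝ} {ω X C : ℝ} (hω : 0 < ω)
    (hf : ∀ t, HasDerivAt f (f' t) t)
    (hf' : ∀ t, HasDerivAt f' ((q t - ω ^ 2) * f t) t) (hq : LocallyIntegrable q volume)
    (hC : ∫ t in Set.Icc (-X) X, |q t| ≤ C) (hCω : 2 * C ≤ ω) {x : ℝ} (hx : |x| ≤ X) :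
    |f x - (f 0 * cos (ω * x) + f' 0 / ω * sin (ω * x))| ≤
      2 * C / ω * (|f 0| + |f' 0 / ω|) := by
  have hX : 0 ≤ X := (abs_nonneg x).trans hx
  have hcont : Continuous f := continuous_iff_continuousAt.2 fun t => (hf t).continuousAt
  have hqint : IntegrableOn q (Set.Icc (-X) X) := hq.integrableOn_isCompact isCompact_Icc
  obtain ⟨m, hm, hmax⟩ := (isCompact_Icc (a := -X) (b := X)).exists_isMaxOn
    ⟨0, by constructor <;> linarith⟩ hcont.abs.continuousOn
  have hmax : ∀ t ∈ Set.Icc (-X) X, |f t| ≤ |f m| := fun t ht => hmax ht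
  have hC0 : 0 ≤ C := (integral_nonneg fun t => abs_nonneg (q t)).trans hC
  have est : ∀ z ∈ Set.Icc (-X) X,
      |f z - (f 0 * cos (ω * z) + f' 0 / ω * sin (ω * z))| ≤ C / ω * |f m| := by
    intro z hz
    rw [sub_free_solution_eq_integral hω hf hf' hq z]
    have hsub : Set.uIoc 0 z ⊆ Set.Icc (-X) X :=
      Set.uIoc_subset_uIcc.trans (Set.uIcc_subset_Icc (by constructor <;> linarith) hz)
    have hgint : IntegrableOn (fun t => |q t| * (|f m| / ω)) (Set.Icc (-X) X) :=
      hqint.abs.mul_const _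
    calc _ ≤ ∫ t in Set.uIoc 0 z, ‖q t * (f t * (sin (ω * (z - t)) / ω))‖ :=
          intervalIntegral.norm_integral_le_integral_norm_uIoc
      _ ≤ ∫ t in Set.uIoc 0 z, |q t| * (|f m| / ω) := by
          refine integral_mono_of_nonneg (.of_forall fun t => norm_nonneg _)
            (hgint.mono_set hsub) ?_
          refine (ae_restrict_iff' measurableSet_uIoc).2 (.of_forall fun t ht => ?_)
          simp only [norm_mul, norm_div, Real.norm_eq_abs, abs_of_pos hω]
          have h1 := hmax t (hsub ht)
          have h2 := abs_sin_le_one (ω * (z - t))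
          rw [← mul_div_assoc]
          gcongr
          nlinarith [abs_nonneg (f t)]
      _ ≤ ∫ t in Set.Icc (-X) X, |q t| * (|f m| / ω) :=
          setIntegral_mono_set hgint (.of_forall fun t => by positivity)
            (LE.le.eventuallyLE hsub)
      _ ≤ C * (|f m| / ω) := by
          rw [integral_mul_const]
          gcongr
      _ = _ := by ring
  have hm2 : |f m| ≤ 2 * (|f 0| + |f' 0 / ω|) := by
    have h1 := est m hm
    have h2 : C / ω ≤ 1 / 2 := by rw [div_le_div_iff₀ hω two_pos]; linarith
    have h3 : |f 0 * cos (ω * m) + f' 0 / ω * sin (ω * m)| ≤ |f 0| + |f' 0 / ω| := by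
      refine (abs_add_le _ _).trans ?_
      rw [abs_mul, abs_mul]
      exact add_le_add (mul_le_of_le_one_right (abs_nonneg _) (abs_cos_le_one _))
        (mul_le_of_le_one_right (abs_nonneg _) (abs_sin_le_one _))
    have h4 := abs_sub_abs_le_abs_sub (f m) (f 0 * cos (ω * m) + f' 0 / ω * sin (ω * m))
    nlinarith [abs_nonneg (f m)]
  calc _ ≤ C / ω * |f m| := est x (abs_le.1 hx)
    _ ≤ C / ω * (2 * (|f 0| + |f' 0 / ω|)) := by gcongr
    _ = _ := by ring

/-- High-energy asymptotics of Schrödinger solutions along a sequence of energies. -/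
theorem eventually_abs_sub_free_solution_le {V : ℝ → ℝ} (hV : LocallyIntegrable V volume)
    {lam : ℕ → ℝ} (hpos : ∀ n, 0 < lam n) (hlam : Tendsto lam atTop atTop) {f f' : ℕ → ℝ → ℝ}
    (hf : ∀ n t, HasDerivAt (f n) (f' n t) t)
    (hf' : ∀ n t, HasDerivAt (f' n) (4 * π ^ 2 * (V t - lam n) * f n t) t) (x : ℝ)
    {ε : ℝ} (hε : 0 < ε) :
    ∀ᶠ n in atTop,
      |f n x - (f n 0 * cos (2 * π * (√(lam n) * x)) +
        f' n 0 / (2 * π * √(lam n)) * sin (2 * π * (√(lam n) * x)))| ≤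
      ε * (|f n 0| + |f' n 0 / (2 * π * √(lam n))|) := by
  have hω : Tendsto (fun n => 2 * π * √(lam n)) atTop atTop :=
    (tendsto_sqrt_atTop.comp hlam).const_mul_atTop (by positivity)
  set q : ℝ → ℝ := fun t => 4 * π ^ 2 * V t with hqdef
  have hq : LocallyIntegrable q volume := hV.smul (4 * π ^ 2)
  set C := ∫ t in Set.Icc (-|x|) |x|, |q t|
  filter_upwards [hω.eventually_ge_atTop (2 * C), hω.eventually_ge_atTop (2 * C / ε)]
    with n h1 h2
  have hωn : 0 < 2 * π * √(lam n) := by have := sqrt_pos.2 (hpos n); positivity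
  have h := abs_sub_free_solution_le (f' := f' n) hωn (hf n) (fun t => by
    convert hf' n t using 1
    rw [mul_pow, sq_sqrt (hpos n).le]
    simp only [hqdef]; ring) hq le_rfl h1 le_rfl
  rw [← mul_assoc]
  refine h.trans ?_
  gcongr
  rw [div_le_iff₀ hε] at h2
  rw [div_le_iff₀ hωn]
  linarith

/-- The relative frequency of `P` among the first `N` natural numbers. -/
noncomputable def relFreq (P : ℕ → Prop) (N : ℕ) : ℝ :=
  (((Finset.range N).filter P).card : ℝ) / N

/-- A set eventually containing a finite disjoint family of sets with given densities has lower
density at least their sum. -/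
theorem eventually_lt_relFreq_of_disjoint {ι : Type*} (T : Finset ι) {R : ι → ℕ → Prop}
    {d : ι → ℝ} (hd : ∀ i ∈ T, Tendsto (relFreq (R i)) atTop (nhds (d i)))
    (hdisj : ∀ i ∈ T, ∀ j ∈ T, ∀ n, R i n → R j n → i = j) {Q : ℕ → Prop}
    (hRQ : ∀ᶠ n in atTop, ∀ i ∈ T, R i n → Q n) {c : ℝ} (hc : c < ∑ i ∈ T, d i) :
    ∀ᶠ N in atTop, c < relFreq Q N := by
  obtain ⟨n₀, hn₀⟩ := eventually_atTop.1 hRQ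
  have hlim : Tendsto (fun N : ℕ => ∑ i ∈ T, relFreq (R i) N - (n₀ : ℝ) / N) atTop
      (nhds (∑ i ∈ T, d i - 0)) :=
    (tendsto_finsetSum T hd).sub (tendsto_const_div_atTop_nhds_zero_nat _)
  rw [sub_zero] at hlim
  filter_upwards [hlim.eventually_const_lt hc] with N hN
  refine hN.trans_le ?_
  simp only [relFreq]
  rw [← Finset.sum_div, ← sub_div]
  gcongr
  rw [sub_le_iff_le_add]
  have hcard : ∑ i ∈ T, ((Finset.range N).filter (R i)).card =
      (T.biUnion fun i => (Finset.range N).filter (R i)).card := by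
    refine (Finset.card_biUnion fun i hi j hj hij => ?_).symm
    refine Finset.disjoint_left.2 fun n hn hn' => hij ?_
    exact hdisj i hi j hj n (Finset.mem_filter.1 hn).2 (Finset.mem_filter.1 hn').2
  have hsub : (T.biUnion fun i => (Finset.range N).filter (R i)) ⊆
      (Finset.range N).filter Q ∪ Finset.range n₀ := by
    intro n hn
    simp only [Finset.mem_biUnion, Finset.mem_filter, Finset.mem_union, Finset.mem_range] at hn ⊢
    obtain ⟨i, hi, hnN, hR⟩ := hn
    rcases lt_or_ge n n₀ with h | h
    · exact .inr h
    · exact .inl ⟨hnN, hn₀ n h i hi hR⟩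
  have := (Finset.card_le_card hsub).trans (Finset.card_union_le _ _)
  rw [← hcard, Finset.card_range] at this
  exact_mod_cast this

theorem relFreq_add_relFreq_not (P : ℕ → Prop) {N : ℕ} (hN : N ≠ 0) :
    relFreq P N + relFreq (fun n => ¬ P n) N = 1 := by
  simp only [relFreq]
  rw [← add_div, div_eq_one_iff_eq (by exact_mod_cast hN)]
  have := Finset.card_filter_add_card_filter_not (s := Finset.range N) P
  rw [Finset.card_range] at this
  norm_cast
  convert this

/-- Densities along the even and the odd numbers determine the density. -/
theorem tendsto_relFreq_of_even_odd {P : ℕ → Prop} {d : ℝ}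
    (he : Tendsto (relFreq fun n => P (2 * n)) atTop (nhds d))
    (ho : Tendsto (relFreq fun n => P (2 * n + 1)) atTop (nhds d)) :
    Tendsto (relFreq P) atTop (nhds d) := by
  have hcard : ∀ N : ℕ, ((Finset.range N).filter P).card =
      ((Finset.range ((N + 1) / 2)).filter fun n => P (2 * n)).card +
      ((Finset.range (N / 2)).filter fun n => P (2 * n + 1)).card := by
    intro N
    induction N with
    | zero => simp
    | succ N ih =>
      rw [Finset.range_add_one, Finset.filter_insert]
      rcases Nat.even_or_odd' N with ⟨k, rfl | rfl⟩
      · have h1 : (2 * k + 1 + 1) / 2 = k + 1 := by omega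
        have h2 : (2 * k + 1) / 2 = k := by omega
        have h3 : 2 * k / 2 = k := by omega
        rw [h2, h3] at ih
        rw [h1, h2, Finset.range_add_one (n := k), Finset.filter_insert]
        split_ifs <;> (simp [ih]; try omega)
      · have h1 : (2 * k + 1 + 1 + 1) / 2 = k + 1 := by omega
        have h2 : (2 * k + 1 + 1) / 2 = k + 1 := by omega
        have h3 : (2 * k + 1) / 2 = k := by omega
        rw [h2, h3] at ih
        rw [h1, h2, Finset.range_add_one (n := k), Finset.filter_insert (p := fun n => P (2 * n + 1)),
          ← Finset.range_add_one (n := k)]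
        split_ifs <;> (simp [ih]; try omega)
  have hratio : ∀ m : ℕ → ℕ, (∀ N, 2 * m N ≤ N + 1) → (∀ N, N ≤ 2 * m N + 1) →
      Tendsto (fun N : ℕ => (m N : ℝ) / N) atTop (nhds (1 / 2)) := by
    intro m h1 h2
    rw [tendsto_iff_norm_sub_tendsto_zero]
    refine squeeze_zero' (.of_forall fun N => norm_nonneg _) ?_
      (tendsto_const_div_atTop_nhds_zero_nat (1 / 2 : ℝ))
    filter_upwards [eventually_gt_atTop 0] with N hN
    have hN' : (0 : ℝ) < N := by exact_mod_cast hN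
    have h1' : (2 * m N : ℝ) ≤ N + 1 := by exact_mod_cast h1 N
    have h2' : (N : ℝ) ≤ 2 * m N + 1 := by exact_mod_cast h2 N
    have : (m N : ℝ) / N - 1 / 2 = (m N - N / 2) / N := by field_simp
    rw [this, norm_div, Real.norm_eq_abs, Real.norm_eq_abs, abs_of_pos hN']
    gcongr
    rw [abs_le]
    constructor <;> linarith
  have hsplit : ∀ N, relFreq P N =
      relFreq (fun n => P (2 * n)) ((N + 1) / 2) * ((((N + 1) / 2 : ℕ) : ℝ) / N) +
      relFreq (fun n => P (2 * n + 1)) (N / 2) * (((N / 2 : ℕ) : ℝ) / N) := by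
    intro N
    have hmul : ∀ (Q : ℕ → Prop) (m : ℕ), relFreq Q m * ((m : ℝ) / N) =
        (((Finset.range m).filter Q).card : ℝ) / N := by
      intro Q m
      rcases eq_or_ne m 0 with rfl | hm
      · simp
      · have : (m : ℝ) ≠ 0 := by exact_mod_cast hm
        simp only [relFreq]
        field_simp
    rw [hmul, hmul, ← add_div, relFreq, hcard N]
    push_cast
    rfl
  have hhalf : Tendsto (fun N : ℕ => N / 2) atTop atTop :=
    Nat.tendsto_div_const_atTop two_ne_zero
  have hlim := ((he.comp (hhalf.comp (tendsto_add_atTop_nat 1))).mul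
    (hratio (fun N => (N + 1) / 2) (fun N => by omega) (fun N => by omega))).add
    ((ho.comp hhalf).mul (hratio (fun N => N / 2) (fun N => by omega) (fun N => by omega)))
  have hd : d * (1 / 2) + d * (1 / 2) = d := by ring
  rw [hd] at hlim
  exact hlim.congr fun N => (hsplit N).symm

/-- The `j`-th quarter of the unit interval, shrunk by `δ` at both ends. -/
def shrunkQuarter (δ : ℝ) (j : Fin 4) : Set ℝ := Set.Icc ((j : ℝ) / 4 + δ) (((j : ℝ) + 1) / 4 - δ)

theorem eq_of_mem_shrunkQuarter {δ u : ℝ} (hδ : 0 < δ) {j k : Fin 4}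
    (hj : u ∈ shrunkQuarter δ j) (hk : u ∈ shrunkQuarter δ k) : j = k := by
  have h1 : (j : ℝ) < k + 1 := by linarith [hj.1, hk.2]
  have h2 : (k : ℝ) < j + 1 := by linarith [hk.1, hj.2]
  norm_cast at h1 h2
  omega

/-- If membership in `P` is governed by whether two equidistributed points lie in quarters of equal
or of different sign, for a sign pattern with as many equal as different pairs, then `P` has
density one half. -/
theorem tendsto_relFreq_half_of_quarters {a b : ℕ → ℝ} (hab : EquidistributedMod1Pair a b)
    {s : Fin 4 → ℤ}
    (hs : (Finset.univ.filter fun p : Fin 4 × Fin 4 => s p.1 = s p.2).card = 8)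
    {P : ℕ → Prop}
    (hP : ∀ δ > 0, ∀ᶠ n in atTop, ∀ j k, Int.fract (a n) ∈ shrunkQuarter δ j →
      Int.fract (b n) ∈ shrunkQuarter δ k → (P n ↔ s j = s k)) :
    Tendsto (relFreq P) atTop (nhds (1 / 2)) := by
  have hs' : (Finset.univ.filter fun p : Fin 4 × Fin 4 => ¬ s p.1 = s p.2).card = 8 := by
    have := Finset.card_filter_add_card_filter_not (s := Finset.univ)
      (fun p : Fin 4 × Fin 4 => s p.1 = s p.2)
    simp only [Finset.card_univ, Fintype.card_prod, Fintype.card_fin] at this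
    omega
  have key : ∀ (Q : ℕ → Prop) (T : Finset (Fin 4 × Fin 4)), T.card = 8 →
      (∀ δ > 0, ∀ᶠ n in atTop, ∀ p ∈ T, Int.fract (a n) ∈ shrunkQuarter δ p.1 ∧
        Int.fract (b n) ∈ shrunkQuarter δ p.2 → Q n) →
      ∀ c < 1 / 2, ∀ᶠ N in atTop, c < relFreq Q N := by
    intro Q T hT hQ c hc
    obtain ⟨δ, hδ, hδ8, hcδ⟩ : ∃ δ : ℝ, 0 < δ ∧ δ ≤ 1 / 8 ∧ c < 8 * (1 / 4 - 2 * δ) ^ 2 := by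
      refine ⟨min (1 / 8) ((1 / 2 - c) / 16), lt_min (by norm_num) (by linarith),
        min_le_left _ _, ?_⟩
      nlinarith [min_le_right (1 / 8) ((1 / 2 - c) / 16),
        lt_min (by norm_num : (0:ℝ) < 1 / 8) (by linarith : 0 < (1 / 2 - c) / 16)]
    refine eventually_lt_relFreq_of_disjoint T (R := fun p n =>
      Int.fract (a n) ∈ shrunkQuarter δ p.1 ∧ Int.fract (b n) ∈ shrunkQuarter δ p.2)
      (d := fun _ => (1 / 4 - 2 * δ) * (1 / 4 - 2 * δ)) ?_ ?_ (hQ δ hδ) ?_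
    · rintro ⟨j, k⟩ -
      have hj : (j : ℝ) ≤ 3 := by exact_mod_cast Nat.le_of_lt_succ j.2
      have hk : (k : ℝ) ≤ 3 := by exact_mod_cast Nat.le_of_lt_succ k.2
      have hj0 : (0 : ℝ) ≤ j := by positivity
      have hk0 : (0 : ℝ) ≤ k := by positivity
      have := hab ((j : ℝ) / 4 + δ) (((j : ℝ) + 1) / 4 - δ) ((k : ℝ) / 4 + δ)
        (((k : ℝ) + 1) / 4 - δ) (by linarith) (by linarith) (by linarith) (by linarith)
        (by linarith) (by linarith)
      have harea : ((((j : ℝ) + 1) / 4 - δ - ((j : ℝ) / 4 + δ)) *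
          (((k : ℝ) + 1) / 4 - δ - ((k : ℝ) / 4 + δ))) =
          (1 / 4 - 2 * δ) * (1 / 4 - 2 * δ) := by ring
      rw [harea] at this
      convert this using 1
      funext N
      simp only [relFreq, shrunkQuarter]
      congr
    · rintro ⟨j, k⟩ - ⟨j', k'⟩ - n ⟨h1, h2⟩ ⟨h1', h2'⟩
      exact Prod.ext (eq_of_mem_shrunkQuarter hδ h1 h1') (eq_of_mem_shrunkQuarter hδ h2 h2')
    · simp only [Finset.sum_const, hT, nsmul_eq_mul]
      push_cast
      linarith
  have hlow := key P _ hs fun δ hδ => (hP δ hδ).mono fun n hn p hp h =>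
    (hn _ _ h.1 h.2).2 (Finset.mem_filter.1 hp).2
  have hupp := key (fun n => ¬ P n) _ hs' fun δ hδ => (hP δ hδ).mono fun n hn p hp h =>
    mt (hn _ _ h.1 h.2).1 (Finset.mem_filter.1 hp).2
  refine tendsto_order.2 ⟨hlow, fun c hc => ?_⟩
  filter_upwards [hupp (1 - c) (by linarith), eventually_ne_atTop 0] with N hN hN0
  linarith [relFreq_add_relFreq_not P hN0]

theorem sgn_mul_of_eq_one_or_neg_one {s u : ℝ} (hs : s = 1 ∨ s = -1) : sgn (s * u) = s * sgn u := by
  unfold sgn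
  rcases hs with rfl | rfl <;> split_ifs <;> linarith

theorem sgn_eq_of_mul_pos_s7 {u v : ℝ} (h : 0 < u * v) : sgn u = sgn v := by
  unfold sgn
  rcases mul_pos_iff.1 h with ⟨h1, h2⟩ | ⟨h1, h2⟩
  · rw [if_pos h1, if_pos h2]
  · rw [if_neg h1.not_gt, if_neg h2.not_gt, if_pos h1, if_pos h2]

theorem sgn_ne_zero {u : ℝ} (h : u ≠ 0) : sgn u ≠ 0 := by
  unfold sgn
  rcases h.lt_or_gt with h | h
  · simp [h, h.not_gt]
  · simp [h]

/-- A perturbation of `A * G` relatively smaller than `|G|` has the sign of `A * G`. -/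
theorem sgn_eq_of_abs_sub_le {u A G ε s : ℝ} (hA : A ≠ 0) (hs : s = 1 ∨ s = -1)
    (h : |u - A * G| ≤ ε * |A|) (hG : ε < s * G) : sgn u = s * sgn A := by
  rw [← sgn_mul_of_eq_one_or_neg_one hs]
  apply sgn_eq_of_mul_pos_s7
  have hA2 : 0 < |A| * |A| := by positivity
  have habs : |s * A| = |A| := by rcases hs with rfl | rfl <;> simp
  have h1 : |(u - A * G) * (s * A)| ≤ ε * (|A| * |A|) := by
    rw [abs_mul, habs, ← mul_assoc]
    gcongr
  have h2 := (abs_le.1 h1).1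
  rw [abs_mul_abs_self] at *
  nlinarith

/-- Sign correlations of two sequences asymptotic to `A n * g (a n)` and `A n * g (b n)`, where `g`
is `1`-periodic and has a constant sign on each open quarter of the unit interval. -/
theorem tendsto_relFreq_sgn_eq {a b : ℕ → ℝ} (hab : EquidistributedMod1Pair a b)
    {s : Fin 4 → ℤ}
    (hs : (Finset.univ.filter fun p : Fin 4 × Fin 4 => s p.1 = s p.2).card = 8)
    (hs1 : ∀ j, s j = 1 ∨ s j = -1) {g : ℝ → ℝ} (hg : Continuous g) (hper : Function.Periodic g 1)
    (hgs : ∀ j : Fin 4, ∀ u ∈ Set.Ioo ((j : ℝ) / 4) (((j : ℝ) + 1) / 4), 0 < s j * g u)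
    {A u v : ℕ → ℝ} (hA : ∀ n, A n ≠ 0)
    (hu : ∀ ε > 0, ∀ᶠ n in atTop, |u n - A n * g (a n)| ≤ ε * |A n|)
    (hv : ∀ ε > 0, ∀ᶠ n in atTop, |v n - A n * g (b n)| ≤ ε * |A n|) :
    Tendsto (relFreq fun n => sgn (u n) = sgn (v n)) atTop (nhds (1 / 2)) := by
  refine tendsto_relFreq_half_of_quarters hab hs fun δ hδ => ?_
  have hmin : ∀ j, ∃ η > 0, ∀ t ∈ shrunkQuarter δ j, η ≤ s j * g t := by
    intro j
    rcases (shrunkQuarter δ j).eq_empty_or_nonempty with h | h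
    · exact ⟨1, one_pos, by simp [h]⟩
    · obtain ⟨m, hm, hmin⟩ := (isCompact_Icc : IsCompact (shrunkQuarter δ j)).exists_isMinOn h
        (hg.const_mul (s j : ℝ)).continuousOn
      exact ⟨_, hgs j m ⟨by linarith [hm.1], by linarith [hm.2]⟩, fun t ht => hmin ht⟩
  choose η hη hle using hmin
  obtain ⟨ε, hε, hεη⟩ : ∃ ε > 0, ∀ j, ε < η j := by
    obtain ⟨i, hi⟩ := Finite.exists_min η
    exact ⟨η i / 2, half_pos (hη i), fun j => (half_lt_self (hη i)).trans_le (hi j)⟩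
  have hs1' : ∀ j, (s j : ℝ) = 1 ∨ (s j : ℝ) = -1 := fun j => by exact_mod_cast hs1 j
  have hfract : ∀ t, g t = g (Int.fract t) := fun t => by
    have := hper.sub_int_mul_eq (x := t) ⌊t⌋
    rw [mul_one] at this
    exact this.symm
  filter_upwards [hu ε hε, hv ε hε] with n hun hvn j k hj hk
  rw [hfract] at hun hvn
  rw [sgn_eq_of_abs_sub_le (hA n) (hs1' j) hun ((hεη j).trans_le (hle j _ hj)),
    sgn_eq_of_abs_sub_le (hA n) (hs1' k) hvn ((hεη k).trans_le (hle k _ hk)),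
    mul_left_inj' (sgn_ne_zero (hA n))]
  norm_cast

theorem cos_two_pi_quarter_sign (j : Fin 4) (u : ℝ)
    (hu : u ∈ Set.Ioo ((j : ℝ) / 4) (((j : ℝ) + 1) / 4)) :
    0 < ((![1, -1, -1, 1] : Fin 4 → ℤ) j : ℝ) * cos (2 * π * u) := by
  have hpi := pi_pos
  obtain ⟨h1, h2⟩ := hu
  fin_cases j <;> norm_num at h1 h2 ⊢
  · exact cos_pos_of_mem_Ioo ⟨by nlinarith, by nlinarith⟩
  · exact cos_neg_of_pi_div_two_lt_of_lt (by nlinarith) (by nlinarith)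
  · exact cos_neg_of_pi_div_two_lt_of_lt (by nlinarith) (by nlinarith)
  · rw [← cos_sub_two_pi]
    exact cos_pos_of_mem_Ioo ⟨by nlinarith, by nlinarith⟩

theorem sin_two_pi_quarter_sign (j : Fin 4) (u : ℝ)
    (hu : u ∈ Set.Ioo ((j : ℝ) / 4) (((j : ℝ) + 1) / 4)) :
    0 < ((![1, 1, -1, -1] : Fin 4 → ℤ) j : ℝ) * sin (2 * π * u) := by
  have hpi := pi_pos
  obtain ⟨h1, h2⟩ := hu
  fin_cases j <;> norm_num at h1 h2 ⊢
  · exact sin_pos_of_pos_of_lt_pi (by nlinarith) (by nlinarith)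
  · exact sin_pos_of_pos_of_lt_pi (by nlinarith) (by nlinarith)
  · rw [← sin_sub_two_pi]
    exact sin_neg_of_neg_of_neg_pi_lt (by nlinarith) (by nlinarith)
  · rw [← sin_sub_two_pi]
    exact sin_neg_of_neg_of_neg_pi_lt (by nlinarith) (by nlinarith)

theorem sgn_zero : sgn 0 = 0 := by simp [sgn]

theorem HasDerivAt.eq_zero_of_even {f : ℝ → ℝ} {d : ℝ} (hf : HasDerivAt f d 0)
    (heven : ∀ x, f (-x) = f x) : d = 0 := by
  have h : HasDerivAt (fun x => f (-x)) (d * (-1)) 0 := by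
    refine HasDerivAt.comp (h₂ := f) 0 ?_ (hasDerivAt_neg 0)
    rwa [neg_zero]
  simp only [heven] at h
  linarith [hf.unique h]

theorem schrodinger_sign_correlation_irrational
    (V : ℝ → ℝ) (hVloc : LocallyIntegrable V volume)
    (hVeven : ∀ x, V (-x) = V x)
    (hVbelow : ∃ c : ℝ, ∀ᵐ x : ℝ, c ≤ V x)
    (hVinfty : Tendsto V (cocompact ℝ) atTop)
    (lam : ℕ → ℝ) (hlampos : ∀ n, 0 < lam n) (hlam : Tendsto lam atTop atTop)
    (w w' : ℕ → ℝ → ℝ)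
    (hw' : ∀ n x, HasDerivAt (w n) (w' n x) x)
    (hODE : ∀ n x, HasDerivAt (w' n) (4 * π ^ 2 * (V x - lam n) * w n x) x)
    (H1even : ∀ n, Even n → ∀ x, w n (-x) = w n x)
    (H1odd : ∀ n, Odd n → ∀ x, w n (-x) = - w n x)
    (H3even : ∀ n : ℕ, sgn (w (2 * n) 0) = (-1 : ℝ) ^ n)
    (H3odd : ∀ n : ℕ, sgn (w' (2 * n + 1) 0) = (-1 : ℝ) ^ n)
    (x y : ℝ) (hirr : Irrational (x / y))
    (hequiEven : EquidistributedMod1Pair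
      (fun n => Real.sqrt (lam (2 * n)) * x) (fun n => Real.sqrt (lam (2 * n)) * y))
    (hequiOdd : EquidistributedMod1Pair
      (fun n => Real.sqrt (lam (2 * n + 1)) * x) (fun n => Real.sqrt (lam (2 * n + 1)) * y)) :
    Tendsto (fun N : ℕ =>
      (((Finset.range N).filter (fun n => sgn (w n x) = sgn (w n y))).card : ℝ) / N)
      atTop (nhds (1/2)) := by
  have he : Tendsto (fun n : ℕ => 2 * n) atTop atTop :=
    tendsto_atTop_mono (fun n => by simp only [id]; omega) tendsto_id
  have ho : Tendsto (fun n : ℕ => 2 * n + 1) atTop atTop :=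
    tendsto_atTop_mono (fun n => by simp only [id]; omega) tendsto_id
  have hE0 : ∀ n, w' (2 * n) 0 = 0 := fun n =>
    (hw' (2 * n) 0).eq_zero_of_even (H1even _ (even_two_mul n))
  have hO0 : ∀ n, w (2 * n + 1) 0 = 0 := fun n => by
    have := H1odd _ (odd_two_mul_add_one n) 0
    rw [neg_zero] at this
    linarith
  have hEne : ∀ n, w (2 * n) 0 ≠ 0 := fun n h => by
    have := H3even n
    rw [h, sgn_zero] at this
    exact pow_ne_zero n (by norm_num) this.symm
  have hOne : ∀ n, w' (2 * n + 1) 0 / (2 * π * √(lam (2 * n + 1))) ≠ 0 := fun n => by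
    have hne : w' (2 * n + 1) 0 ≠ 0 := fun h => by
      have := H3odd n
      rw [h, sgn_zero] at this
      exact pow_ne_zero n (by norm_num) this.symm
    have := sqrt_pos.2 (hlampos (2 * n + 1))
    positivity
  have hper : ∀ t : ℝ, 2 * π * (t + 1) = 2 * π * t + 2 * π := fun t => by ring
  have evenAsymp : ∀ z, ∀ ε > 0, ∀ᶠ n in atTop, |w (2 * n) z -
      w (2 * n) 0 * cos (2 * π * (√(lam (2 * n)) * z))| ≤ ε * |w (2 * n) 0| := by
    intro z ε hε
    have := eventually_abs_sub_free_solution_le hVloc (fun n => hlampos (2 * n)) (hlam.comp he)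
      (fun n => hw' (2 * n)) (fun n => hODE (2 * n)) z hε
    simpa [hE0] using this
  have oddAsymp : ∀ z, ∀ ε > 0, ∀ᶠ n in atTop, |w (2 * n + 1) z -
      w' (2 * n + 1) 0 / (2 * π * √(lam (2 * n + 1))) *
        sin (2 * π * (√(lam (2 * n + 1)) * z))| ≤
      ε * |w' (2 * n + 1) 0 / (2 * π * √(lam (2 * n + 1)))| := by
    intro z ε hε
    have := eventually_abs_sub_free_solution_le hVloc (fun n => hlampos (2 * n + 1))
      (hlam.comp ho) (fun n => hw' (2 * n + 1)) (fun n => hODE (2 * n + 1)) z hε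
    simpa only [hO0, zero_mul, zero_add, abs_zero, Function.comp_apply] using this
  refine tendsto_relFreq_of_even_odd
    (tendsto_relFreq_sgn_eq hequiEven (s := ![1, -1, -1, 1]) (by decide) (by decide)
      (g := fun t => cos (2 * π * t)) (by fun_prop) (fun t => by simp only [hper, cos_add_two_pi])
      cos_two_pi_quarter_sign hEne (evenAsymp x) (evenAsymp y))
    (tendsto_relFreq_sgn_eq hequiOdd (s := ![1, 1, -1, -1]) (by decide) (by decide)
      (g := fun t => sin (2 * π * t)) (by fun_prop) (fun t => by simp only [hper, sin_add_two_pi])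
      sin_two_pi_quarter_sign hOne (oddAsymp x) (oddAsymp y))
end
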